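/- For every ε > 0, every integer r ≥ 1, and every r-SCB integer function w, there exists an r-CCB function ŵ of order J ≤ 1 + ⌈log_{1+ε} r⌉ such that w(i) ≤ ŵ(i) ≤ (1+ε)·w(i) for all i ∈ {0,1,…,r}. -/

import Mathlib

/-- An `r`-SCB integer function: `w 0 = 0`, `w` is nonnegative and nondecreasing on
`{0,…,r}`, and `2·w(j) ≥ w(j-1) + w(j+1)` for `1 ≤ j ≤ r-1`. -/
def IsSCB (r : ℕ) (w : ℕ → ℝ) : Prop :=
  w 0 = 0 ∧ (∀ i, i < r → w i ≤ w (i + 1)) ∧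
    ∀ j, 1 ≤ j → j + 1 ≤ r → w (j - 1) + w (j + 1) ≤ 2 * w j

/-- An `r`-CCB function of order `J`: on `{0,…,r}` it has the form
`ŵ(i) = ∑_{j} a_j · min(i, b_j)` with `a_j > 0` and `0 < b_1 < … < b_J ≤ r`. -/
def IsCCB (r J : ℕ) (what : ℕ → ℝ) : Prop :=
  ∃ a b : Fin J → ℝ,
    (∀ j, 0 < a j) ∧ (∀ j, 0 < b j) ∧ StrictMono b ∧ (∀ j, b j ≤ (r : ℝ)) ∧
    ∀ i : ℕ, i ≤ r → what i = ∑ j, a j * min (i : ℝ) (b j)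

/-!
The sequence `w i / i` is nonincreasing, so on a stretch of indices of ratio `1 + ε` the values of
`w` vary by at most the factor `1 + ε`. Hence a nondecreasing minorant of `w` that agrees with `w`
at `r` and at every `⌈(1 + ε) ^ k⌉ ≤ r` loses at most this factor, and `1 + ε` times it is the
required approximation. The piecewise linear interpolant is such a minorant. It is a CCB function:
subtracting from `w` the linear function with the slope of the last piece leaves an SCB function
on a shorter range, and that slope is the coefficient of the last term.
-/

namespace IsSCB

variable {r i j k : ℕ} {w : ℕ → ℝ}

theorem monotoneOn (hw : IsSCB r w) : MonotoneOn w (Set.Iic r) := by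
  intro i _ j hj hij
  induction j, hij using Nat.le_induction with
  | base => exact le_rfl
  | succ j _ ih => exact (ih (Nat.le_of_succ_le hj)).trans (hw.2.1 j hj)

theorem nonneg (hw : IsSCB r w) (hi : i ≤ r) : 0 ≤ w i :=
  hw.1.ge.trans (hw.monotoneOn (Nat.zero_le r) hi (Nat.zero_le i))

theorem increment_le_increment (hw : IsSCB r w) (hij : i ≤ j) (hj : j < r) :
    w (j + 1) - w j ≤ w (i + 1) - w i := by
  induction j, hij using Nat.le_induction with
  | base => exact le_rfl
  | succ j _ ih =>
    have concave := hw.2.2 (j + 1) (by lia) hj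
    rw [Nat.add_sub_cancel] at concave
    linarith [ih (by lia)]

theorem le_tangent (hw : IsSCB r w) (hi : i ≤ r) (hj : j < r) :
    w i ≤ w j + (w (j + 1) - w j) * ((i : ℝ) - j) := by
  rcases le_total j i with hji | hij
  · induction i, hji using Nat.le_induction with
    | base => simp
    | succ i hji ih =>
      have := hw.increment_le_increment hji hi
      push_cast
      linarith [ih (by lia)]
  · induction hij using Nat.decreasingInduction with
    | self => simp
    | of_succ i hij ih =>
      have := hw.increment_le_increment hij.le hj
      push_cast at ih
      linarith [ih (by lia)]

theorem chord_le (hw : IsSCB r w) (hij : i ≤ j) (hjk : j ≤ k) (hk : k ≤ r) :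
    ((k : ℝ) - j) * w i + ((j : ℝ) - i) * w k ≤ ((k : ℝ) - i) * w j := by
  rcases hjk.eq_or_lt with rfl | hlt
  · linarith
  · have hij' : (0 : ℝ) ≤ j - i := sub_nonneg.2 (mod_cast hij)
    have hjk' : (0 : ℝ) ≤ k - j := sub_nonneg.2 (mod_cast hjk)
    have left := mul_le_mul_of_nonneg_left
      (hw.le_tangent (i := i) (j := j) (by lia) (by lia)) hjk'
    have right := mul_le_mul_of_nonneg_left (hw.le_tangent hk (hlt.trans_le hk)) hij'
    linarith

theorem le_mul_of_cast_le_mul {c : ℝ} (hw : IsSCB r w) (hji : j ≤ i) (hi : i ≤ r)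
    (hc : (i : ℝ) ≤ c * j) : w i ≤ c * w j := by
  rcases j.eq_zero_or_pos with rfl | hj
  · obtain rfl : i = 0 := by simpa using hc
    simp [hw.1]
  · have hj' : (0 : ℝ) < j := mod_cast hj
    refine le_of_mul_le_mul_left ?_ hj'
    calc (j : ℝ) * w i ≤ i * w j := by simpa [hw.1] using hw.chord_le (Nat.zero_le j) hji hi
      _ ≤ c * j * w j := mul_le_mul_of_nonneg_right hc (hw.nonneg (hji.trans hi))
      _ = j * (c * w j) := by ring

theorem sub_linear {m : ℕ} {σ : ℝ} (hw : IsSCB r w) (hm : m ≤ r)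
    (hσ : ∀ i < m, σ ≤ w (i + 1) - w i) : IsSCB m (fun i => w i - σ * i) := by
  refine ⟨by simp [hw.1], fun i hi => ?_, fun j hj hjm => ?_⟩
  · push_cast
    linarith [hσ i hi]
  · have := hw.2.2 j hj (hjm.trans hm)
    push_cast [hj]
    linarith

end IsSCB

/-- The slope of the chord of `w` between the indices `i` and `j`; it is `0` when `i = j`.
For the last two nodes of the interpolant it is the coefficient of the last CCB term. -/
noncomputable def chordSlope (w : ℕ → ℝ) (i j : ℕ) : ℝ := (w j - w i) / ((j : ℝ) - i)

theorem chordSlope_mul_sub (w : ℕ → ℝ) {i j : ℕ} (hij : i < j) :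
    chordSlope w i j * ((j : ℝ) - i) = w j - w i :=
  div_mul_cancel₀ _ (sub_pos.2 (Nat.cast_lt.2 hij)).ne'

namespace IsSCB

variable {r i j k : ℕ} {w : ℕ → ℝ}

theorem chordSlope_nonneg (hw : IsSCB r w) (hij : i ≤ j) (hj : j ≤ r) : 0 ≤ chordSlope w i j :=
  div_nonneg (sub_nonneg.2 (hw.monotoneOn (hij.trans hj) hj hij))
    (sub_nonneg.2 (Nat.cast_le.2 hij))

theorem chordSlope_le_increment (hw : IsSCB r w) (hki : k ≤ i) (hij : i < j) (hj : j ≤ r) :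
    chordSlope w i j ≤ w (k + 1) - w k := by
  refine le_trans ?_ (hw.increment_le_increment hki (hij.trans_le hj))
  rw [chordSlope, div_le_iff₀ (sub_pos.2 (Nat.cast_lt.2 hij)), sub_le_iff_le_add']
  exact hw.le_tangent hj (hij.trans_le hj)

theorem add_chordSlope_mul_le (hw : IsSCB r w) (hij : i ≤ j) (hjk : j ≤ k) (hik : i < k)
    (hk : k ≤ r) : w i + chordSlope w i k * ((j : ℝ) - i) ≤ w j := by
  refine le_of_mul_le_mul_left ?_ (sub_pos.2 (Nat.cast_lt.2 hik) : (0 : ℝ) < k - i)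
  calc ((k : ℝ) - i) * (w i + chordSlope w i k * (j - i))
      = (k - i) * w i + chordSlope w i k * (k - i) * (j - i) := by ring
    _ = (k - j) * w i + (j - i) * w k := by rw [chordSlope_mul_sub w hik]; ring
    _ ≤ (k - i) * w j := hw.chord_le hij hjk hk

end IsSCB

namespace IsCCB

variable {r m J : ℕ} {v : ℕ → ℝ}

theorem zero (r : ℕ) : IsCCB r 0 0 :=
  ⟨Fin.elim0, Fin.elim0, by simp, by simp, Subsingleton.strictMono _, by simp, by simp⟩

theorem monotoneOn (hv : IsCCB r J v) : MonotoneOn v (Set.Iic r) := by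
  obtain ⟨a, b, ha, -, -, -, hsum⟩ := hv
  intro i hi j hj hij
  rw [hsum i hi, hsum j hj]
  gcongr with l
  exact (ha l).le

theorem const_mul {c : ℝ} (hv : IsCCB r J v) (hc : 0 < c) : IsCCB r J (fun i => c * v i) := by
  obtain ⟨a, b, ha, hb, hmono, hbr, hsum⟩ := hv
  refine ⟨fun l => c * a l, b, fun l => mul_pos hc (ha l), hb, hmono, hbr, fun i hi => ?_⟩
  simp only [hsum i hi, Finset.mul_sum, mul_assoc]

theorem comp_min (hv : IsCCB m J v) (hmr : m ≤ r) : IsCCB r J (fun i => v (min i m)) := by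
  obtain ⟨a, b, ha, hb, hmono, hbm, hsum⟩ := hv
  refine ⟨a, b, ha, hb, hmono, fun l => (hbm l).trans (mod_cast hmr), fun i _ => ?_⟩
  simp only [hsum _ (min_le_right i m), Nat.cast_min, min_assoc, min_eq_right (hbm _)]

theorem comp_min_add_linear {σ : ℝ} (hv : IsCCB m J v) (hmr : m < r) (hσ : 0 < σ) :
    IsCCB r (J + 1) (fun i => v (min i m) + σ * i) := by
  obtain ⟨a, b, ha, hb, hmono, hbm, hsum⟩ := hv
  have hmr' : (m : ℝ) < r := mod_cast hmr
  refine ⟨Fin.snoc a σ, Fin.snoc b r, ?_, ?_, ?_, ?_, fun i hi => ?_⟩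
  · simpa [Fin.forall_fin_succ'] using ⟨ha, hσ⟩
  · simpa [Fin.forall_fin_succ'] using ⟨hb, m.zero_le.trans_lt hmr⟩
  · intro l l' hl
    induction l' using Fin.lastCases with
    | last =>
      obtain ⟨l, rfl⟩ := Fin.exists_castSucc_eq.2 hl.ne
      simpa using (hbm l).trans_lt hmr'
    | cast l' =>
      obtain ⟨l, rfl⟩ := Fin.exists_castSucc_eq.2 (hl.trans_le (Fin.le_last _)).ne
      simpa using hmono hl
  · simpa [Fin.forall_fin_succ'] using fun l => (hbm l).trans hmr'.le
  · have hir : (i : ℝ) ≤ r := mod_cast hi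
    simp only [Fin.sum_univ_castSucc, Fin.snoc_castSucc, Fin.snoc_last, min_eq_left hir,
      hsum _ (min_le_right i m), Nat.cast_min, min_assoc, min_eq_right (hbm _)]

theorem exists_comp_min_add_linear {σ : ℝ} (hv : IsCCB m J v) (hmr : m < r) (hσ : 0 ≤ σ) :
    ∃ J' ≤ J + 1, IsCCB r J' (fun i => v (min i m) + σ * i) := by
  rcases hσ.eq_or_lt with rfl | hσ
  · exact ⟨J, J.le_succ, by simpa using hv.comp_min hmr.le⟩
  · exact ⟨J + 1, le_rfl, hv.comp_min_add_linear hmr hσ⟩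

end IsCCB

namespace IsSCB

variable {n : ℕ → ℕ} {k : ℕ} {w : ℕ → ℝ}

theorem exists_isCCB_interpolant (hn : Monotone n) (hn0 : n 0 = 0) (hw : IsSCB (n k) w) :
    ∃ J ≤ k, ∃ v, IsCCB (n k) J v ∧ (∀ j ≤ k, v (n j) = w (n j)) ∧ ∀ i ≤ n k, v i ≤ w i := by
  induction k generalizing w with
  | zero =>
    refine ⟨0, le_rfl, 0, IsCCB.zero _, ?_, ?_⟩ <;> simp [hn0, hw.1]
  | succ k ih =>
    rcases (hn k.le_succ).eq_or_lt with heq | hlt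
    · rw [← heq] at hw ⊢
      obtain ⟨J, hJ, v, hv, hnode, hle⟩ := ih hw
      refine ⟨J, hJ.trans k.le_succ, v, hv, fun j hj => ?_, hle⟩
      rcases Nat.le_succ_iff.1 hj with hj | rfl
      · exact hnode j hj
      · simpa [← heq] using hnode k le_rfl
    set σ := chordSlope w (n k) (n (k + 1))
    have hw' : IsSCB (n k) (fun i => w i - σ * i) :=
      hw.sub_linear hlt.le fun i hi => hw.chordSlope_le_increment hi.le hlt le_rfl
    obtain ⟨J, hJ, u, hu, hnode, hle⟩ := ih hw'
    obtain ⟨J', hJ', hv⟩ :=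
      hu.exists_comp_min_add_linear hlt (hw.chordSlope_nonneg hlt.le le_rfl)
    refine ⟨J', by lia, _, hv, fun j hj => ?_, fun i hi => ?_⟩
    · rcases Nat.le_succ_iff.1 hj with hj | rfl
      · simp [min_eq_left (hn hj), hnode j hj, σ]
      · have := chordSlope_mul_sub w hlt
        simp only [min_eq_right hlt.le, hnode k le_rfl]
        linarith
    · rcases le_total i (n k) with hik | hki
      · simp only [min_eq_left hik]
        linarith [hle i hik]
      · have := hw.add_chordSlope_mul_le hki hi hlt le_rfl
        simp only [min_eq_right hki, hnode k le_rfl]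
        linarith

theorem exists_isCCB_approx {c : ℝ} (hc : 0 < c) (hn : Monotone n) (hn0 : n 0 = 0)
    (hw : IsSCB (n k) w) (hdense : ∀ i ≤ n k, ∃ j ≤ k, n j ≤ i ∧ (i : ℝ) ≤ c * n j) :
    ∃ J ≤ k, ∃ v, IsCCB (n k) J v ∧ ∀ i ≤ n k, w i ≤ v i ∧ v i ≤ c * w i := by
  obtain ⟨J, hJ, v, hv, hnode, hle⟩ := hw.exists_isCCB_interpolant hn hn0
  refine ⟨J, hJ, _, hv.const_mul hc, fun i hi => ⟨?_, mul_le_mul_of_nonneg_left (hle i hi) hc.le⟩⟩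
  obtain ⟨j, hj, hji, hij⟩ := hdense i hi
  calc w i ≤ c * w (n j) := hw.le_mul_of_cast_le_mul hji hi hij
    _ = c * v (n j) := by rw [hnode j hj]
    _ ≤ c * v i := mul_le_mul_of_nonneg_left (hv.monotoneOn (hji.trans hi) hi hji) hc.le

end IsSCB

/-- The interpolation nodes `0, ⌈c ^ 0⌉, ⌈c ^ 1⌉, ⌈c ^ 2⌉, …`, truncated at `r` so that the
sequence ends exactly at `r`. -/
noncomputable def geometricNode (c : ℝ) (r : ℕ) : ℕ → ℕ
  | 0 => 0
  | k + 1 => min ⌈c ^ k⌉₊ r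

section geometricNode

variable {c : ℝ} {r L : ℕ}

theorem monotone_geometricNode (hc : 1 ≤ c) (r : ℕ) : Monotone (geometricNode c r) := by
  refine monotone_nat_of_le_succ fun k => ?_
  cases k with
  | zero => exact Nat.zero_le _
  | succ k => exact min_le_min_right r (Nat.ceil_mono (pow_le_pow_right₀ hc k.le_succ))

theorem geometricNode_succ_eq (hr : (r : ℝ) ≤ c ^ L) : geometricNode c r (L + 1) = r :=
  min_eq_right (Nat.cast_le.1 (hr.trans (Nat.le_ceil _)))

theorem exists_geometricNode_le (hc : 1 < c) (hr : (r : ℝ) ≤ c ^ L) {i : ℕ} (hi : i ≤ r) :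
    ∃ j ≤ L + 1, geometricNode c r j ≤ i ∧ (i : ℝ) ≤ c * geometricNode c r j := by
  rcases i.eq_zero_or_pos with rfl | hpos
  · exact ⟨0, Nat.zero_le _, by simp [geometricNode]⟩
  obtain ⟨k, hki, hik⟩ := exists_nat_pow_near (Nat.one_le_cast.2 hpos : (1 : ℝ) ≤ i) hc
  have hkL : k ≤ L :=
    (pow_le_pow_iff_right₀ hc).1 ((hki.trans (Nat.cast_le.2 hi)).trans hr)
  have hceil : ⌈c ^ k⌉₊ ≤ i := Nat.ceil_le.2 hki
  have hnode : geometricNode c r (k + 1) = ⌈c ^ k⌉₊ := min_eq_left (hceil.trans hi)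
  refine ⟨k + 1, Nat.succ_le_succ hkL, hnode ▸ hceil, ?_⟩
  calc (i : ℝ) ≤ c * c ^ k := by rw [← pow_succ']; exact hik.le
    _ ≤ c * geometricNode c r (k + 1) := by
      rw [hnode]
      exact mul_le_mul_of_nonneg_left (Nat.le_ceil _) (zero_le_one.trans hc.le)

end geometricNode

theorem le_pow_natCeil_logb {c x : ℝ} (hc : 1 < c) (hx : 0 < x) : x ≤ c ^ ⌈Real.logb c x⌉₊ := by
  rw [← Real.rpow_natCast, ← Real.logb_le_iff_le_rpow hc hx]
  exact Nat.le_ceil _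

/-- **Sparse CCB approximation of SCB functions.** For every `ε > 0`, `r ≥ 1`, and every
`r`-SCB integer function `w`, there is an `r`-CCB function `ŵ` of order
`J ≤ 1 + ⌈log_{1+ε} r⌉` with `w(i) ≤ ŵ(i) ≤ (1+ε)·w(i)` for all `i ∈ {0,…,r}`. -/
theorem sparse_ccb_approximation (ε : ℝ) (hε : 0 < ε) (r : ℕ) (hr : 1 ≤ r)
    (w : ℕ → ℝ) (hw : IsSCB r w) :
    ∃ (J : ℕ) (what : ℕ → ℝ),
      (J : ℤ) ≤ 1 + ⌈Real.logb (1 + ε) (r : ℝ)⌉ ∧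
      IsCCB r J what ∧
      ∀ i ≤ r, w i ≤ what i ∧ what i ≤ (1 + ε) * w i := by
  have hc : 1 < 1 + ε := lt_add_of_pos_right 1 hε
  have hr1 : (1 : ℝ) ≤ r := Nat.one_le_cast.2 hr
  set L := ⌈Real.logb (1 + ε) r⌉₊
  have hrL : (r : ℝ) ≤ (1 + ε) ^ L := le_pow_natCeil_logb hc (zero_lt_one.trans_le hr1)
  have hlast : geometricNode (1 + ε) r (L + 1) = r := geometricNode_succ_eq hrL
  obtain ⟨J, hJ, v, hv, happrox⟩ :=
    IsSCB.exists_isCCB_approx (k := L + 1) (zero_lt_one.trans hc)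
      (monotone_geometricNode hc.le r) rfl (hlast.symm ▸ hw)
      fun i hi => exists_geometricNode_le hc hrL (hlast ▸ hi)
  rw [hlast] at hv happrox
  refine ⟨J, v, ?_, hv, happrox⟩
  rw [← Int.natCast_ceil_eq_ceil (Real.logb_nonneg hc hr1)]
  lia
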